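/- arXiv:2511.16327 — 3 statements merged into one kernel-verified Lean document; each statement's English description precedes it below -/
import Mathlib

section
/- For all real numbers a, b with 0 < a < b, the function x ↦ (1 - exp(-a·x)) / (1 - exp(-b·x)) is strictly increasing on (0, ∞). -/
open Real Set

/-- For `0 < a < b`, the ratio `x ↦ (1 - exp(-a·x)) / (1 - exp(-b·x))` is
strictly increasing on `(0, ∞)`. -/
theorem ratio_one_sub_exp_strictMonoOn (a b : ℝ) (ha : 0 < a) (hab : a < b) :
    StrictMonoOn (fun x : ℝ => (1 - Real.exp (-a * x)) / (1 - Real.exp (-b * x))) (Ioi 0) := by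
  intro x hx y hy hxy
  have hx0 : 0 < x := hx
  have hb : 0 < b := ha.trans hab
  have key : ∀ t : ℝ, Real.exp (-b * t) ^ (a / b) = Real.exp (-a * t) := by
    intro t
    rw [← Real.exp_mul]
    congr 1
    field_simp
  have huv : Real.exp (-b * y) < Real.exp (-b * x) := Real.exp_lt_exp.2 (by nlinarith)
  have hv : Real.exp (-b * x) < 1 := Real.exp_lt_one_iff.2 (by nlinarith)
  have h := (Real.strictConcaveOn_rpow (div_pos ha hb)
    ((div_lt_one hb).2 hab)).slope_anti_adjacent
    (x := Real.exp (-b * y)) (y := Real.exp (-b * x)) (z := 1)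
    (Real.exp_pos _).le (by simp) huv hv
  simp only [key, Real.one_rpow] at h
  show _ / _ < _ / _
  rw [div_lt_div_iff₀ (by linarith) (by linarith)] at h ⊢
  nlinarith
end

section
/- Let α > 0 and d₀ > 0 be real numbers with 4·α²·d₀ ≥ 1. Then the function f(s) = exp(2·α·s) / (s² + d₀) is strictly increasing on all of ℝ. -/
open Real

/-- For `α > 0`, `d₀ > 0` with `4α²d₀ ≥ 1`, the SS-protocol squared channel gain
`s ↦ exp(2αs)/(s² + d₀)` is strictly increasing on all of `ℝ`. -/
theorem ss_gain_strictMono (α d₀ : ℝ) (hα : 0 < α) (hd : 0 < d₀)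
    (h : 4 * α ^ 2 * d₀ ≥ 1) :
    StrictMono (fun s : ℝ => Real.exp (2 * α * s) / (s ^ 2 + d₀)) := by
  intro a b hab
  show Real.exp (2 * α * a) / (a ^ 2 + d₀) < Real.exp (2 * α * b) / (b ^ 2 + d₀)
  have ha : 0 < a ^ 2 + d₀ := by positivity
  have hb : 0 < b ^ 2 + d₀ := by positivity
  obtain ⟨u, hu⟩ : ∃ u, u = 2 * α * (b - a) := ⟨_, rfl⟩
  obtain ⟨x, hx⟩ : ∃ x, x = 2 * α * a := ⟨_, rfl⟩
  have hu0 : 0 < u := by rw [hu]; have := sub_pos.2 hab; positivity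
  have hexp : 1 + u + u ^ 2 / 2 + u ^ 3 / 6 ≤ Real.exp u := by
    have := Real.sum_le_exp_of_nonneg hu0.le 4
    simpa [Finset.sum_range_succ, Nat.factorial] using this
  have hQ : 0 < (1 + u / 2 + u ^ 2 / 6) * (x ^ 2 + 1) - (2 * x + u) := by
    have hA : 0 < 1 + u / 2 + u ^ 2 / 6 := by positivity
    have h4 : 0 < (4 * (1 + u / 2 + u ^ 2 / 6)) *
        ((1 + u / 2 + u ^ 2 / 6) * (x ^ 2 + 1) - (2 * x + u)) := by
      have e : (4 * (1 + u / 2 + u ^ 2 / 6)) *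
          ((1 + u / 2 + u ^ 2 / 6) * (x ^ 2 + 1) - (2 * x + u)) =
          (2 * (1 + u / 2 + u ^ 2 / 6) * (x - 1) + (u + u ^ 2 / 3)) ^ 2
            + (u ^ 2 / 3 + u ^ 4 / 9) := by ring
      rw [e]; positivity
    exact pos_of_mul_pos_right h4 (by positivity)
  have key : 4 * α ^ 2 * (b ^ 2 + d₀) < 4 * α ^ 2 * (Real.exp u * (a ^ 2 + d₀)) := by
    obtain ⟨D, hD⟩ : ∃ D, D = 4 * α ^ 2 * d₀ := ⟨_, rfl⟩
    have hD1 : 1 ≤ D := by rw [hD]; exact h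
    have e1 : 4 * α ^ 2 * (b ^ 2 + d₀) = (x + u) ^ 2 + D := by rw [hx, hu, hD]; ring
    have e2 : 4 * α ^ 2 * (Real.exp u * (a ^ 2 + d₀)) = Real.exp u * (x ^ 2 + D) := by
      rw [hx, hD]; ring
    rw [e1, e2]
    have p1 := mul_le_mul_of_nonneg_right hexp (show 0 ≤ x ^ 2 + D by positivity)
    have p2 := mul_pos hu0 hQ
    have p3 : 0 ≤ (u + u ^ 2 / 2 + u ^ 3 / 6) * (D - 1) :=
      mul_nonneg (by positivity) (by linarith)
    nlinarith
  have key2 := lt_of_mul_lt_mul_left key (by positivity)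
  rw [div_lt_div_iff₀ ha hb]
  have e : Real.exp (2 * α * b) = Real.exp (2 * α * a) * Real.exp u := by
    rw [← Real.exp_add, hu]; congr 1; ring
  rw [e, mul_assoc (Real.exp _)]
  exact mul_lt_mul_of_pos_left key2 (Real.exp_pos _)
end

section
/- Let α > 0 and d₀ > 0 be real numbers with 4·α²·d₀ < 1, and set s₋ = (1 - √(1 - 4·α²·d₀))/(2·α) and s₊ = (1 + √(1 - 4·α²·d₀))/(2·α). Then the function f(s) = exp(2·α·s)/(s² + d₀) is strictly increasing on (-∞, s₋] and strictly decreasing on [s₋, s₊]; in particular, f has a local maximum at s₋. -/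
open Real Set

/-- For `α > 0`, `d₀ > 0` with `4α²d₀ < 1`, setting
`s₋ = (1 - √(1 - 4α²d₀))/(2α)` and `s₊ = (1 + √(1 - 4α²d₀))/(2α)`,
the SS-protocol squared channel gain `f(s) = exp(2αs)/(s² + d₀)` is strictly
increasing on `(-∞, s₋]` and strictly decreasing on `[s₋, s₊]`; in particular,
`f` has a local maximum at `s₋`. -/
theorem ss_gain_optimal_position (α d₀ : ℝ) (hα : 0 < α) (hd : 0 < d₀)
    (h : 4 * α ^ 2 * d₀ < 1) :
    StrictMonoOn (fun s : ℝ => Real.exp (2 * α * s) / (s ^ 2 + d₀))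
        (Iic ((1 - Real.sqrt (1 - 4 * α ^ 2 * d₀)) / (2 * α))) ∧
      StrictAntiOn (fun s : ℝ => Real.exp (2 * α * s) / (s ^ 2 + d₀))
        (Icc ((1 - Real.sqrt (1 - 4 * α ^ 2 * d₀)) / (2 * α))
          ((1 + Real.sqrt (1 - 4 * α ^ 2 * d₀)) / (2 * α))) ∧
      IsLocalMax (fun s : ℝ => Real.exp (2 * α * s) / (s ^ 2 + d₀))
        ((1 - Real.sqrt (1 - 4 * α ^ 2 * d₀)) / (2 * α)) := by
  have hR : Real.sqrt (1 - 4 * α ^ 2 * d₀) ^ 2 = 1 - 4 * α ^ 2 * d₀ :=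
    Real.sq_sqrt (by linarith)
  have hR0 : 0 < Real.sqrt (1 - 4 * α ^ 2 * d₀) := Real.sqrt_pos.mpr (by linarith)
  generalize Real.sqrt (1 - 4 * α ^ 2 * d₀) = r at hR hR0
  have hab : (1 - r) / (2 * α) < (1 + r) / (2 * α) := by
    gcongr
    linarith
  have hfac : ∀ s : ℝ, 2 * α * (s ^ 2 + d₀) - 2 * s
      = 2 * α * ((s - (1 - r) / (2 * α)) * (s - (1 + r) / (2 * α))) := by
    intro s
    field_simp
    linear_combination hR
  generalize (1 - r) / (2 * α) = a at hab hfac ⊢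
  generalize (1 + r) / (2 * α) = b at hab hfac ⊢
  have hpos : ∀ s : ℝ, 0 < s ^ 2 + d₀ := fun s => by positivity
  have hder : ∀ s : ℝ, HasDerivAt (fun s : ℝ => Real.exp (2 * α * s) / (s ^ 2 + d₀))
      (Real.exp (2 * α * s) * (2 * α * ((s - a) * (s - b))) / (s ^ 2 + d₀) ^ 2) s := by
    intro s
    rw [← hfac s]
    have h1 : HasDerivAt (fun s : ℝ => Real.exp (2 * α * s))
        (Real.exp (2 * α * s) * (2 * α * 1)) s :=
      ((hasDerivAt_id s).const_mul (2 * α)).exp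
    have h2 : HasDerivAt (fun s : ℝ => s ^ 2 + d₀) (2 * s) s := by
      simpa using (hasDerivAt_pow 2 s).add_const d₀
    exact (h1.div h2 (hpos s).ne').congr_deriv (by ring)
  have hcont : Continuous (fun s : ℝ => Real.exp (2 * α * s) / (s ^ 2 + d₀)) :=
    continuous_iff_continuousAt.mpr fun s => (hder s).continuousAt
  have hmono : StrictMonoOn (fun s : ℝ => Real.exp (2 * α * s) / (s ^ 2 + d₀)) (Iic a) := by
    apply strictMonoOn_of_deriv_pos (convex_Iic a) hcont.continuousOn
    intro s hs
    rw [interior_Iic, mem_Iio] at hs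
    rw [(hder s).deriv]
    have := mul_pos_of_neg_of_neg (sub_neg.mpr hs) (sub_neg.mpr (hs.trans hab))
    have := hpos s
    positivity
  have hanti : StrictAntiOn (fun s : ℝ => Real.exp (2 * α * s) / (s ^ 2 + d₀)) (Icc a b) := by
    apply strictAntiOn_of_deriv_neg (convex_Icc a b) hcont.continuousOn
    intro s hs
    rw [interior_Icc, mem_Ioo] at hs
    rw [(hder s).deriv]
    have h1 := mul_neg_of_pos_of_neg (sub_pos.mpr hs.1) (sub_neg.mpr hs.2)
    have := hpos s
    exact div_neg_of_neg_of_pos (mul_neg_of_pos_of_neg (Real.exp_pos _)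
      (mul_neg_of_pos_of_neg (by positivity) h1)) (by positivity)
  refine ⟨hmono, hanti, ?_⟩
  filter_upwards [Iio_mem_nhds hab] with s hs
  rcases le_total s a with hsa | hsa
  · exact hmono.monotoneOn hsa (mem_Iic.mpr le_rfl) hsa
  · exact hanti.antitoneOn ⟨le_rfl, hab.le⟩ ⟨hsa, le_of_lt hs⟩ hsa
end
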